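/- Let β ∈ (1,2] with 1_β = a_1a_2⋯a_n0^∞, a_n = 1 (so X_β is SFT), and let {i_1 = 1 < i_2 < ⋯ < i_t} = {i ≤ n : a_i = 1}. Then the zeta function of X_β satisfies ζ_{σ_β}(t) = 1/(1 − t^{i_1} − t^{i_2} − ⋯ − t^{i_t}) as formal power series, and ζ_{σ_β} = ζ_{σ_S} where X(S) = ASS(X_β). -/

import Mathlib

/-! ## Basic symbolic dynamics over `ℤ` -/

/-- The shift map on bi-infinite sequences. -/
def shiftMap {A : Type} (x : ℤ → A) : ℤ → A := fun i => x (i + 1)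

/-- The word `w` occurs in `x` starting at coordinate `i`. -/
def occursAt {A : Type} (w : List A) (x : ℤ → A) (i : ℤ) : Prop :=
  ∀ (k : ℕ) (h : k < w.length), x (i + k) = w.get ⟨k, h⟩

/-- The word `w` occurs somewhere in `x`. -/
def occursIn {A : Type} (w : List A) (x : ℤ → A) : Prop := ∃ i : ℤ, occursAt w x i

/-- The word `w` belongs to the language of `X`. -/
def InLang {A : Type} (X : Set (ℤ → A)) (w : List A) : Prop := ∃ x ∈ X, occursIn w x

/-- `X` is a subshift: it is defined by a set of forbidden words. -/
def IsSubshift {A : Type} (X : Set (ℤ → A)) : Prop :=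
  ∃ F : Set (List A), X = { x | ∀ w ∈ F, ¬ occursIn w x }

/-- `X` is a shift of finite type: defined by a finite set of forbidden words. -/
def IsSFT {A : Type} (X : Set (ℤ → A)) : Prop :=
  ∃ F : Finset (List A), X = { x | ∀ w ∈ F, ¬ occursIn w x }

/-- `φ` is a sliding block code on `X` (with some memory `m` and anticipation `n`). -/
def IsSliding {A B : Type} (X : Set (ℤ → A)) (φ : (ℤ → A) → ℤ → B) : Prop :=
  ∃ m n : ℕ, ∀ x ∈ X, ∀ y ∈ X, ∀ i : ℤ,
    (∀ j : ℤ, i - (m : ℤ) ≤ j → j ≤ i + (n : ℤ) → x j = y j) → φ x i = φ y i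

/-- `φ` is a factor code from `X` onto `Y`. -/
def IsFactorCode {A B : Type} (X : Set (ℤ → A)) (Y : Set (ℤ → B))
    (φ : (ℤ → A) → ℤ → B) : Prop :=
  IsSliding X φ ∧ (∀ x ∈ X, φ x ∈ Y) ∧ (∀ y ∈ Y, ∃ x ∈ X, φ x = y) ∧
    (∀ x ∈ X, φ (shiftMap x) = shiftMap (φ x))

/-- `X` and `Y` are topologically conjugate (via mutually inverse sliding block codes). -/
def TopConjugate {A B : Type} (X : Set (ℤ → A)) (Y : Set (ℤ → B)) : Prop :=
  ∃ (φ : (ℤ → A) → ℤ → B) (ψ : (ℤ → B) → ℤ → A),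
    IsFactorCode X Y φ ∧ IsFactorCode Y X ψ ∧
    (∀ x ∈ X, ψ (φ x) = x) ∧ (∀ y ∈ Y, φ (ψ y) = y)

/-- `φ` is a right-resolving (1-block) code on `X`: it is induced by a symbol map `Φ`
such that whenever `ab` and `ac` are 2-blocks of `X` with `Φ b = Φ c`, then `b = c`. -/
def IsRightResolvingCode {A B : Type} (X : Set (ℤ → A)) (φ : (ℤ → A) → ℤ → B) : Prop :=
  ∃ Φ : A → B, (∀ x ∈ X, ∀ i : ℤ, φ x i = Φ (x i)) ∧
    ∀ a b c : A, InLang X [a, b] → InLang X [a, c] → Φ b = Φ c → b = c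

/-- `x` is a doubly transitive point of `X`. -/
def DoublyTransitive {A : Type} (X : Set (ℤ → A)) (x : ℤ → A) : Prop :=
  ∀ w : List A, InLang X w →
    (∀ N : ℤ, ∃ i ≥ N, occursAt w x i) ∧ (∀ N : ℤ, ∃ i ≤ N, occursAt w x i)

/-- `φ : W → Y` is one-to-one almost everywhere: every doubly transitive point of `Y`
has exactly one preimage in `W`. -/
def OneOneAE {A B : Type} (W : Set (ℤ → A)) (Y : Set (ℤ → B))
    (φ : (ℤ → A) → ℤ → B) : Prop :=
  ∀ y ∈ Y, DoublyTransitive Y y → ∃! x, x ∈ W ∧ φ x = y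

/-- `φ` is finite-to-one on `W` (uniformly bounded fibers). -/
def FiniteToOne {A B : Type} (W : Set (ℤ → A)) (φ : (ℤ → A) → ℤ → B) : Prop :=
  ∃ M : ℕ, ∀ y : ℤ → B, { x ∈ W | φ x = y }.Finite ∧ { x ∈ W | φ x = y }.ncard ≤ M

/-- `X` and `Y` are right-resolving almost conjugate. -/
def RRAlmostConjugate {A B : Type} (X : Set (ℤ → A)) (Y : Set (ℤ → B)) : Prop :=
  ∃ (C : Type) (_ : Finite C) (W : Set (ℤ → C))
    (φX : (ℤ → C) → ℤ → A) (φY : (ℤ → C) → ℤ → B),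
    IsSFT W ∧ IsFactorCode W X φX ∧ IsFactorCode W Y φY ∧
    IsRightResolvingCode W φX ∧ IsRightResolvingCode W φY ∧
    OneOneAE W X φX ∧ OneOneAE W Y φY

/-- `X` and `Y` are right-resolving finitely equivalent. -/
def RRFinEquiv {A B : Type} (X : Set (ℤ → A)) (Y : Set (ℤ → B)) : Prop :=
  ∃ (C : Type) (_ : Finite C) (W : Set (ℤ → C))
    (φX : (ℤ → C) → ℤ → A) (φY : (ℤ → C) → ℤ → B),
    IsSFT W ∧ IsFactorCode W X φX ∧ IsFactorCode W Y φY ∧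
    IsRightResolvingCode W φX ∧ IsRightResolvingCode W φY ∧
    FiniteToOne W φX ∧ FiniteToOne W φY

/-- An irreducible shift space. -/
def IrreducibleShift {A : Type} (X : Set (ℤ → A)) : Prop :=
  ∀ u w : List A, InLang X u → InLang X w → ∃ v : List A, InLang X (u ++ v ++ w)

/-- `v` is a synchronizing word for `X`. -/
def SynchronizingWord {A : Type} (X : Set (ℤ → A)) (v : List A) : Prop :=
  InLang X v ∧ ∀ u w : List A, InLang X (u ++ v) → InLang X (v ++ w) →
    InLang X (u ++ v ++ w)

/-- A synchronized system: an irreducible subshift with a synchronizing word. -/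
def Synchronized {A : Type} (X : Set (ℤ → A)) : Prop :=
  IsSubshift X ∧ IrreducibleShift X ∧ ∃ v : List A, SynchronizingWord X v

/-! ## S-gap shifts and β-shifts -/

/-- The S-gap shift `X(S)` for `S ⊆ ℕ ∪ {0}`: numbers of `0`s between successive `1`s
lie in `S`; `1`s occur infinitely often in both directions unless `S` is infinite. -/
def SGap (S : Set ℕ) : Set (ℤ → Fin 2) :=
  { x | (∀ i j : ℤ, i < j → x i = 1 → x j = 1 →
          (∀ k : ℤ, i < k → k < j → x k = 0) → (j - i - 1).toNat ∈ S) ∧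
        (S.Finite → (∀ N : ℤ, ∃ i ≥ N, x i = 1) ∧ (∀ N : ℤ, ∃ i ≤ N, x i = 1)) }

/-- Remainders of the (greedy) β-expansion of `1` with digits in `{0,1}`:
`betaRem β n = 1 - Σ_{i ≤ n} a_i β^{-i}`. -/
noncomputable def betaRem (β : ℝ) : ℕ → ℝ
  | 0 => 1
  | n + 1 => betaRem β n - (if β⁻¹ ^ (n + 1) ≤ betaRem β n then β⁻¹ ^ (n + 1) else 0)

/-- The digit `a_{n+1}` of the β-expansion `1_β = a_1 a_2 a_3 ⋯` of `1`. -/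
noncomputable def betaDigit (β : ℝ) (n : ℕ) : Fin 2 :=
  if β⁻¹ ^ (n + 1) ≤ betaRem β n then 1 else 0

/-- Lexicographic order on one-sided sequences. -/
def lexLE {A : Type} [LinearOrder A] (u v : ℕ → A) : Prop :=
  u = v ∨ ∃ n : ℕ, (∀ k < n, u k = v k) ∧ u n < v n

/-- The β-shift: `x ∈ X_β` iff every right tail of `x` is lexicographically `≤ 1_β`. -/
def betaShift (β : ℝ) : Set (ℤ → Fin 2) :=
  { x | ∀ i : ℤ, lexLE (fun n : ℕ => x (i + (n : ℤ))) (betaDigit β) }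

/-- The set `S = {i - 1 : a_i = 1}` of the associated S-gap shift `ASS(X_β) = X(S)`. -/
def assocS (β : ℝ) : Set ℕ := { n | betaDigit β n = 1 }

/-- Eventual periodicity of a sequence. -/
def EvPeriodic {α : Type} (a : ℕ → α) : Prop :=
  ∃ p : ℕ, 0 < p ∧ ∃ N : ℕ, ∀ n ≥ N, a (n + p) = a n

/-! ## Finite directed multigraphs, edge shifts, labeled graphs -/

structure FinGraph where
  V : Type
  E : Type
  [fintypeV : Fintype V]
  [fintypeE : Fintype E]
  src : E → V
  tgt : E → V

attribute [instance] FinGraph.fintypeV FinGraph.fintypeE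

/-- The edge shift of a graph. -/
def FinGraph.edgeShift (G : FinGraph) : Set (ℤ → G.E) :=
  { ξ | ∀ i : ℤ, G.tgt (ξ i) = G.src (ξ (i + 1)) }

structure GraphHom (G H : FinGraph) where
  vmap : G.V → H.V
  emap : G.E → H.E
  src_eq : ∀ e : G.E, H.src (emap e) = vmap (G.src e)
  tgt_eq : ∀ e : G.E, H.tgt (emap e) = vmap (G.tgt e)

structure GraphIso (G H : FinGraph) where
  vmap : G.V ≃ H.V
  emap : G.E ≃ H.E
  src_eq : ∀ e : G.E, H.src (emap e) = vmap (G.src e)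
  tgt_eq : ∀ e : G.E, H.tgt (emap e) = vmap (G.tgt e)

/-- `H ⪯ G` : the edge shift `X_H` is a right-resolving factor of `X_G`,
via a graph homomorphism whose restriction to each out-edge set is injective. -/
def RRFactorOf (H G : FinGraph) : Prop :=
  ∃ Φ : GraphHom G H,
    (∀ η ∈ H.edgeShift, ∃ ξ ∈ G.edgeShift, ∀ i : ℤ, Φ.emap (ξ i) = η i) ∧
    ∀ I : G.V, Set.InjOn Φ.emap { e : G.E | G.src e = I }

/-- `M` is the minimal right-resolving factor graph `M_G` of `G`: it is the smallest
element in the order `⪯` on graphs right-resolving-factoring from `G`. -/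
def IsMinFactorGraph (M G : FinGraph) : Prop :=
  RRFactorOf M G ∧ ∀ H : FinGraph, RRFactorOf H G → RRFactorOf M H

/-- The nested sequence of equivalence relations `∼ₙ` on vertices of `G` whose limiting
partition gives the states of `M_G`. -/
def simRel (G : FinGraph) : ℕ → G.V → G.V → Prop
  | 0, _, _ => True
  | n + 1, I, J => ∀ K : G.V,
      { e : G.E | G.src e = I ∧ simRel G n (G.tgt e) K }.ncard =
      { e : G.E | G.src e = J ∧ simRel G n (G.tgt e) K }.ncard

/-- The limiting equivalence relation; its classes are the states of `M_G`. -/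
def simLim (G : FinGraph) (I J : G.V) : Prop := ∀ n : ℕ, simRel G n I J

/-- A labeled graph over the alphabet `A`. -/
structure LGraph (A : Type) where
  G : FinGraph
  label : G.E → A

def LGraph.RightResolving {A : Type} (𝒢 : LGraph A) : Prop :=
  ∀ e f : 𝒢.G.E, 𝒢.G.src e = 𝒢.G.src f → 𝒢.label e = 𝒢.label f → e = f

/-- `𝒢` presents the shift space `X`: `X = ℒ_∞(X_G)`. -/
def LGraph.Presents {A : Type} (𝒢 : LGraph A) (X : Set (ℤ → A)) : Prop :=
  X = { x | ∃ ξ ∈ 𝒢.G.edgeShift, ∀ i : ℤ, 𝒢.label (ξ i) = x i }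

def FinGraph.Irreducible (G : FinGraph) : Prop :=
  ∀ I J : G.V, Relation.ReflTransGen (fun u v => ∃ e : G.E, G.src e = u ∧ G.tgt e = v) I J

/-- A sofic shift: one presented by a finite labeled graph. -/
def IsSofic {A : Type} (X : Set (ℤ → A)) : Prop := ∃ 𝒢 : LGraph A, 𝒢.Presents X

/-- The Fischer cover: the minimal right-resolving presentation of an irreducible
sofic shift. -/
def IsFischerCover {A : Type} (𝒢 : LGraph A) (X : Set (ℤ → A)) : Prop :=
  𝒢.G.Irreducible ∧ 𝒢.RightResolving ∧ 𝒢.Presents X ∧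
    ∀ ℋ : LGraph A, ℋ.RightResolving → ℋ.Presents X →
      Fintype.card 𝒢.G.V ≤ Fintype.card ℋ.G.V

/-! ## Countable labeled graphs (for almost Markov systems) -/

structure CtblLGraph (A : Type) where
  V : Type
  E : Type
  ctblV : Countable V
  ctblE : Countable E
  src : E → V
  tgt : E → V
  label : E → A

def CtblLGraph.RightResolving {A : Type} (𝒢 : CtblLGraph A) : Prop :=
  ∀ e f : 𝒢.E, 𝒢.src e = 𝒢.src f → 𝒢.label e = 𝒢.label f → e = f

def CtblLGraph.Irreducible {A : Type} (𝒢 : CtblLGraph A) : Prop :=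
  ∀ I J : 𝒢.V, Relation.ReflTransGen (fun u v => ∃ e : 𝒢.E, 𝒢.src e = u ∧ 𝒢.tgt e = v) I J

/-- `w` is the label of some finite path in `𝒢`. -/
def CtblLGraph.IsPathLabel {A : Type} (𝒢 : CtblLGraph A) (w : List A) : Prop :=
  ∃ es : List 𝒢.E, es.map 𝒢.label = w ∧ es.Chain' (fun e f => 𝒢.tgt e = 𝒢.src f)

/-- `𝒢` presents `X` (on the level of languages). -/
def CtblLGraph.PresentsLang {A : Type} (𝒢 : CtblLGraph A) (X : Set (ℤ → A)) : Prop :=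
  ∀ w : List A, InLang X w ↔ 𝒢.IsPathLabel w

/-- An almost Markov system: it has a right-resolving presentation by a countable
irreducible labeled graph. -/
def AlmostMarkov {A : Type} (X : Set (ℤ → A)) : Prop :=
  ∃ 𝒢 : CtblLGraph A, 𝒢.RightResolving ∧ 𝒢.Irreducible ∧ 𝒢.PresentsLang X

/-! ## Words `𝒟(S)`, primitivity -/

/-- The word `𝒟(S) = d_1 d_2 ⋯ d_{k-2} (d_{k-1} + s_0 + 1)` for `S = {s_0 < ⋯ < s_{k-1}}`
enumerated by `s`. -/
def DSword (k : ℕ) (s : ℕ → ℕ) : List ℕ :=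
  (List.range (k - 1)).map fun i =>
    if i + 2 < k then s (i + 1) - s i else s (i + 1) - s i + s 0 + 1

/-- The word `𝒟(S)` of a finite set `S = {s_0 < s_1 < ⋯ < s_{k-1}}` of naturals. -/
def gapWord (F : Finset ℕ) : List ℕ :=
  let l := F.sort (· ≤ ·)
  (List.range (l.length - 1)).map fun i =>
    if i + 2 < l.length then l.getD (i + 1) 0 - l.getD i 0
    else l.getD (i + 1) 0 - l.getD i 0 + l.getD 0 0 + 1

/-- `q` is a period of the word `w` (in the sense `w = u^{|w|/q}` with `|u| = q`). -/
def ListPeriod (w : List ℕ) (q : ℕ) : Prop :=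
  0 < q ∧ q ∣ w.length ∧ ∀ i : ℕ, i + q < w.length → w.getD i 0 = w.getD (i + q) 0

/-- A word is primitive if its least period equals its length. -/
def ListPrimitive (w : List ℕ) : Prop := ∀ q : ℕ, ListPeriod w q → q = w.length

/-! ## Entropy, periodic points and zeta functions -/

/-- The number of words of length `n` in the language of `X`. -/
noncomputable def wordCount {A : Type} (X : Set (ℤ → A)) (n : ℕ) : ℕ :=
  { w : List A | w.length = n ∧ InLang X w }.ncard

/-- `X` has topological entropy `h`, i.e. `(1/n) log |ℬ_n(X)| → h`. -/
def HasEntropy {A : Type} (X : Set (ℤ → A)) (h : ℝ) : Prop :=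
  Filter.Tendsto (fun n : ℕ => Real.log (wordCount X n) / n) Filter.atTop (nhds h)

/-- The topological entropy of `X`. -/
noncomputable def entropy {A : Type} (X : Set (ℤ → A)) : ℝ :=
  Filter.atTop.limsup fun n : ℕ => Real.log (wordCount X n) / n

/-- The set of points of `X` of period `n`. -/
def perPts {A : Type} (X : Set (ℤ → A)) (n : ℕ) : Set (ℤ → A) :=
  { x ∈ X | shiftMap^[n] x = x }

/-- `p_n`, the number of points of period `n`. -/
noncomputable def pcount {A : Type} (X : Set (ℤ → A)) (n : ℕ) : ℕ := (perPts X n).ncard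

/-- The exponential of a formal power series (intended for zero constant term). -/
noncomputable def expPS (g : PowerSeries ℚ) : PowerSeries ℚ :=
  PowerSeries.mk fun n =>
    ∑ k ∈ Finset.range (n + 1), (PowerSeries.coeff n (g ^ k)) / (Nat.factorial k : ℚ)

/-- The Artin–Mazur zeta function `ζ_σ(t) = exp (Σ_{n ≥ 1} (p_n / n) tⁿ)` of `X`. -/
noncomputable def zetaPS {A : Type} (X : Set (ℤ → A)) : PowerSeries ℚ :=
  expPS (PowerSeries.mk fun n => if n = 0 then 0 else (pcount X n : ℚ) / (n : ℚ))

/-! ## Continued fractions parametrization of S-gap shifts -/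

/-- The value of a finite continued fraction `[a_0; a_1, …, a_n]`. -/
def cfVal : List ℕ → ℚ
  | [] => 0
  | [a] => (a : ℚ)
  | a :: rest => (a : ℚ) + 1 / cfVal rest

/-- The sequence `d_0 = s_0`, `d_n = s_n - s_{n-1}` of gap differences of `S`. -/
noncomputable def dSeq (S : Set ℕ) (n : ℕ) : ℕ :=
  if n = 0 then Nat.nth (· ∈ S) 0 else Nat.nth (· ∈ S) n - Nat.nth (· ∈ S) (n - 1)

open scoped Classical in
/-- The real number `x_S = [d_0; d_1, d_2, …]` assigned to the S-gap shift `X(S)`. -/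
noncomputable def xOf (S : Set ℕ) : ℝ :=
  if hS : S.Finite then ((cfVal ((List.range hS.toFinset.card).map (dSeq S)) : ℚ) : ℝ)
  else Filter.atTop.limsup fun n : ℕ =>
    ((cfVal ((List.range (n + 1)).map (dSeq S)) : ℚ) : ℝ)

/-!
Both shifts are compared with the tilings of `ℤ` by tiles of lengths `m + 1`, where `m` runs over a
finite set `S`.

If `x` is periodic and all its tails are `≤ a = 1_β`, then they are even `< a`, because a periodic
tail cannot end in `0^∞` without vanishing. So each cell `i` starts a block `[i, i + m]` of `x` that
ends at the first difference from `a`, and there `a m = 1` and `x (i + m) = 0`. Since no tail of `a`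
exceeds `a`, two such blocks are nested or disjoint, and the maximal ones tile `ℤ`. The word written
on a tile is determined by its length, so `x` can be recovered from the tiling, and every tiling by
tiles of lengths `m + 1` with `a m = 1` occurs. On the other hand, the `1`s of a point of the S-gap
shift `X(S)` are the left ends of the tiles of such a tiling, and every tiling arises.

For the tilings, let `P = ∑_{m ∈ S} t^(m + 1)`. Removing the first tile shows that the tilings of
intervals have generating function `1 / (1 - P)`. Moving the tile over `0` so that it starts at `0`,
and cutting there, counts the tilings of `ℤ` of period `n` as the coefficient of `t^n` in
`t P' / (1 - P)`, which is the logarithmic derivative of `1 / (1 - P)` multiplied by `t`.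
-/

section PowerSeries

open PowerSeries

lemma expPS_eq_subst {g : ℚ⟦X⟧} (hg : constantCoeff g = 0) : expPS g = (exp ℚ).subst g := by
  ext n
  have coeff_pow_eq_zero : ∀ k, n < k → coeff n (g ^ k) = 0 := fun k hk ↦
    coeff_of_lt_order _ <|
      (Nat.cast_lt.mpr hk).trans_le <| le_order_pow_of_constantCoeff_eq_zero k hg
  rw [coeff_subst' (.of_constantCoeff_zero' hg), expPS, coeff_mk,
    finsum_eq_sum_of_support_subset (s := Finset.range (n + 1))]
  · refine Finset.sum_congr rfl fun k _ ↦ ?_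
    rw [coeff_exp, smul_eq_mul, Algebra.algebraMap_self_apply, one_div, div_eq_inv_mul]
  · intro k hk
    by_contra hkn
    refine hk ?_
    simp only [coeff_pow_eq_zero k (by simpa using hkn), smul_zero]

lemma derivative_expPS {g : ℚ⟦X⟧} (hg : constantCoeff g = 0) :
    derivative ℚ (expPS g) = expPS g * derivative ℚ g := by
  rw [expPS_eq_subst hg, derivative_subst (.of_constantCoeff_zero' hg), derivative_exp]

lemma expPS_mul_one_sub_eq_one {g P : ℚ⟦X⟧} (hg : constantCoeff g = 0)
    (hP : constantCoeff P = 0) (hgP : derivative ℚ g * (1 - P) = derivative ℚ P) :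
    expPS g * (1 - P) = 1 := by
  refine derivative.ext ?_ ?_
  · rw [Derivation.leibniz, derivative_expPS hg, map_sub, derivative_one, smul_eq_mul, smul_eq_mul]
    linear_combination expPS g * hgP
  · rw [map_mul, map_sub, hP, ← coeff_zero_eq_constantCoeff_apply, expPS, coeff_mk]
    simp

lemma coeff_sum_mul_X_pow_mul (S : Finset ℕ) (w : ℕ → ℚ) (f : ℚ⟦X⟧) (n : ℕ) :
    coeff n ((∑ m ∈ S, C (w m) * X ^ m) * f) = ∑ m ∈ S with m ≤ n, w m * coeff (n - m) f := by
  simp only [Finset.sum_mul, map_sum, mul_assoc, coeff_C_mul, coeff_X_pow_mul', mul_ite, mul_zero,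
    Finset.sum_filter]

lemma derivative_X_pow_succ (m : ℕ) :
    derivative ℚ (X ^ (m + 1) : ℚ⟦X⟧) = C ((m : ℚ) + 1) * X ^ m := by
  simp [Derivation.leibniz_pow]

/- The first recurrence says that `∑ c n tⁿ` is `1 / (1 - P)`, where `P = ∑_{m ∈ S} t^(m + 1)`, and
the second one that `∑ p n tⁿ⁻¹` is `P' / (1 - P)`, the derivative of `-log (1 - P)`. -/
lemma expPS_mul_one_sub_eq_one_of_recurrence (S : Finset ℕ) (p c : ℕ → ℕ) (hc₀ : c 0 = 1)
    (hc : ∀ n, c (n + 1) = ∑ m ∈ S with m ≤ n, c (n - m))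
    (hp : ∀ n, p (n + 1) = ∑ m ∈ S with m ≤ n, (m + 1) * c (n - m)) :
    expPS (PowerSeries.mk fun n ↦ if n = 0 then 0 else (p n : ℚ) / n) *
      (1 - ∑ m ∈ S, X ^ (m + 1)) = 1 := by
  set g : ℚ⟦X⟧ := PowerSeries.mk fun n ↦ if n = 0 then 0 else (p n : ℚ) / n with hg
  set P : ℚ⟦X⟧ := ∑ m ∈ S, X ^ (m + 1) with hP
  set F : ℚ⟦X⟧ := PowerSeries.mk fun n ↦ (c n : ℚ) with hF
  have P_eq : P = X * ∑ m ∈ S, C 1 * X ^ m := by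
    simp only [hP, Finset.mul_sum, pow_succ', map_one, one_mul]
  have F_eq : F = 1 + P * F := by
    ext n
    cases n with
    | zero => simp [hF, P_eq, hc₀]
    | succ n =>
      rw [P_eq, map_add, mul_assoc, coeff_succ_X_mul, coeff_sum_mul_X_pow_mul]
      simp [hF, hc, coeff_one]
  have derivative_g : derivative ℚ g = derivative ℚ P * F := by
    ext n
    rw [hP, map_sum]
    simp only [derivative_X_pow_succ]
    rw [coeff_sum_mul_X_pow_mul, coeff_derivative, hg, coeff_mk, if_neg n.succ_ne_zero,
      Nat.cast_succ, div_mul_cancel₀ _ (Nat.cast_add_one_ne_zero n), hp]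
    simp [hF]
  refine expPS_mul_one_sub_eq_one (by simp [hg]) (by simp [hP]) ?_
  rw [derivative_g]
  linear_combination derivative ℚ P * F_eq

end PowerSeries

section Shift

variable {A B : Type}

lemma shiftMap_iterate_apply (x : ℤ → A) (n : ℕ) (i : ℤ) : shiftMap^[n] x i = x (i + n) := by
  induction n generalizing i with
  | zero => simp
  | succ n ih =>
    rw [Function.iterate_succ_apply', shiftMap, ih, Nat.cast_succ, add_right_comm, ← add_assoc]

lemma shiftMap_iterate_eq_self_iff {x : ℤ → A} {n : ℕ} :
    shiftMap^[n] x = x ↔ Function.Periodic x (n : ℤ) := by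
  simp only [funext_iff, shiftMap_iterate_apply, Function.Periodic]

lemma apply_emod_of_periodic {x : ℤ → A} {n : ℤ} (hx : Function.Periodic x n) (i : ℤ) :
    x (i % n) = x i := by
  rw [Int.emod_def, mul_comm]
  simpa using hx.sub_int_mul_eq (i / n)

lemma finite_setOf_periodic [Finite A] {n : ℕ} (hn : 0 < n) :
    {x : ℤ → A | Function.Periodic x (n : ℤ)}.Finite := by
  refine Set.Finite.of_finite_image (f := fun x (k : Fin n) ↦ x k) (Set.toFinite _) ?_
  intro x hx y hy hxy
  funext i
  have hi : ((i % n).toNat : ℤ) = i % n := Int.toNat_of_nonneg (Int.emod_nonneg i (by omega))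
  have hin := Int.emod_lt_of_pos i (b := n) (by omega)
  have hxy_i : x ((i % n).toNat : ℤ) = y ((i % n).toNat : ℤ) :=
    congrFun hxy ⟨(i % n).toNat, by omega⟩
  rwa [hi, apply_emod_of_periodic hx, apply_emod_of_periodic hy] at hxy_i

lemma pcount_eq_of_bijOn {X : Set (ℤ → A)} {Y : Set (ℤ → B)} {φ : (ℤ → A) → ℤ → B}
    (hX : Set.MapsTo shiftMap X X) (hφ : Set.BijOn φ X Y)
    (hcomm : Function.Semiconj φ shiftMap shiftMap) (n : ℕ) : pcount X n = pcount Y n := by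
  have hper : φ '' perPts X n = perPts Y n := by
    ext y
    constructor
    · rintro ⟨x, ⟨hx, hxn⟩, rfl⟩
      exact ⟨hφ.mapsTo hx, by rw [← hcomm.iterate_right n x, hxn]⟩
    · rintro ⟨hy, hyn⟩
      obtain ⟨x, hx, rfl⟩ := hφ.surjOn hy
      refine ⟨x, ⟨hx, hφ.injOn (hX.iterate n hx) hx ?_⟩, rfl⟩
      rw [hcomm.iterate_right n x, hyn]
  rw [pcount, pcount, ← hper, (hφ.injOn.mono fun x hx ↦ hx.1).ncard_image]

lemma zetaPS_congr {X : Set (ℤ → A)} {Y : Set (ℤ → B)}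
    (h : ∀ n, 0 < n → pcount X n = pcount Y n) : zetaPS X = zetaPS Y := by
  unfold zetaPS
  congr 2
  funext n
  split_ifs with hn
  · rfl
  · rw [h n (Nat.pos_of_ne_zero hn)]

end Shift

section Tiling

/-- `c < d` are consecutive elements of the set `A` of integers. Sets of integers are encoded as
bi-infinite sequences of propositions, so that the shift map and `pcount` apply to them. -/
def Consecutive (A : ℤ → Prop) (c d : ℤ) : Prop :=
  A c ∧ A d ∧ c < d ∧ ∀ k, A k → k ≤ c ∨ d ≤ k

/-- The cell `j` lies in a tile `[c, c + m]` with `m ∈ S`, where `A` is the set of the left ends of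
the tiles. Thus `m ∈ S` encodes a tile with `m + 1` cells. -/
def Covered (S : Set ℕ) (A : ℤ → Prop) (j : ℤ) : Prop :=
  ∃ c : ℤ, ∃ m ∈ S, c ≤ j ∧ j ≤ c + (m : ℕ) ∧ Consecutive A c (c + m + 1)

/-- The tilings of `ℤ` by tiles with `m + 1` cells, `m ∈ S`, given by the left ends of the tiles. -/
def tilings (S : Set ℕ) : Set (ℤ → Prop) := {A | ∀ j, Covered S A j}

/-- The tilings of `[0, n)` by tiles with `m + 1` cells, `m ∈ S`, given by the left ends of the
tiles together with `n`. -/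
def finiteTilings (S : Set ℕ) (n : ℕ) : Set (ℤ → Prop) :=
  {B | (∀ i, B i → 0 ≤ i ∧ i ≤ n) ∧ B 0 ∧ ∀ j : ℤ, 0 ≤ j → j < n → Covered S B j}

variable {S : Set ℕ} {A : ℤ → Prop} {n : ℕ}

lemma Consecutive.unique {c d c' d' j : ℤ} (h : Consecutive A c d) (h' : Consecutive A c' d')
    (hcj : c ≤ j) (hjd : j < d) (hcj' : c' ≤ j) (hjd' : j < d') : c = c' ∧ d = d' := by
  obtain ⟨hc, hd, -, hgap⟩ := h
  obtain ⟨hc', hd', -, hgap'⟩ := h'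
  have := hgap c' hc'
  have := hgap d' hd'
  have := hgap' c hc
  have := hgap' d hd
  omega

lemma consecutive_translate (t : ℤ) {c d : ℤ} :
    Consecutive (fun i ↦ A (i + t)) c d ↔ Consecutive A (c + t) (d + t) := by
  refine and_congr_right fun _ ↦ and_congr_right fun _ ↦ and_congr (by omega) ?_
  refine ⟨fun h k hk ↦ ?_, fun h k hk ↦ ?_⟩
  · have := h (k - t) (by simpa using hk)
    omega
  · have := h (k + t) hk
    omega

lemma covered_translate (t : ℤ) {j : ℤ} :
    Covered S (fun i ↦ A (i + t)) j ↔ Covered S A (j + t) := by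
  constructor
  · rintro ⟨c, m, hm, hcj, hjc, h⟩
    refine ⟨c + t, m, hm, by omega, by omega, ?_⟩
    convert (consecutive_translate t).1 h using 1
    ring
  · rintro ⟨c, m, hm, hcj, hjc, h⟩
    refine ⟨c - t, m, hm, by omega, by omega, (consecutive_translate t).2 ?_⟩
    convert h using 1 <;> ring

lemma translate_mem_tilings (hA : A ∈ tilings S) (t : ℤ) : (fun i ↦ A (i + t)) ∈ tilings S :=
  fun j ↦ (covered_translate t).2 (hA (j + t))

lemma exists_consecutive (hright : ∀ N, ∃ i ≥ N, A i) (hleft : ∀ N, ∃ i ≤ N, A i) (j : ℤ) :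
    ∃ c d, c ≤ j ∧ j < d ∧ Consecutive A c d := by
  obtain ⟨c, ⟨hc, hcj⟩, hc_max⟩ := Int.exists_greatest_of_bdd (P := fun k ↦ A k ∧ k ≤ j)
    ⟨j, fun k hk ↦ hk.2⟩ ((hleft j).imp fun k hk ↦ hk.symm)
  obtain ⟨d, ⟨hd, hjd⟩, hd_min⟩ := Int.exists_least_of_bdd (P := fun k ↦ A k ∧ j + 1 ≤ k)
    ⟨j + 1, fun k hk ↦ hk.2⟩ ((hright (j + 1)).imp fun k hk ↦ hk.symm)
  refine ⟨c, d, hcj, hjd, hc, hd, by omega, fun k hk ↦ ?_⟩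
  rcases le_or_gt k j with hkj | hjk
  · exact .inl (hc_max k ⟨hk, hkj⟩)
  · exact .inr (hd_min k ⟨hk, hjk⟩)

lemma mem_SGap_iff (hS : S.Finite) {y : ℤ → Fin 2} :
    y ∈ SGap S ↔ (fun i ↦ y i = 1) ∈ tilings S := by
  have consecutive_iff {i j : ℤ} : Consecutive (fun k ↦ y k = 1) i j ↔
      y i = 1 ∧ y j = 1 ∧ i < j ∧ ∀ k, i < k → k < j → y k = 0 := by
    refine and_congr_right fun _ ↦ and_congr_right fun _ ↦ and_congr_right fun _ ↦
      forall_congr' fun k ↦ ?_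
    omega
  constructor
  · rintro ⟨hgap, hrec⟩ j
    obtain ⟨hright, hleft⟩ := hrec hS
    obtain ⟨c, d, hcj, hjd, hcd⟩ := exists_consecutive hright hleft j
    obtain ⟨hc, hd, hlt, hzero⟩ := consecutive_iff.1 hcd
    refine ⟨c, _, hgap c d hlt hc hd hzero, hcj, by omega, ?_⟩
    convert hcd using 1
    omega
  · refine fun hy ↦ ⟨fun i j hij hi hj hzero ↦ ?_, fun _ ↦ ⟨fun N ↦ ?_, fun N ↦ ?_⟩⟩
    · obtain ⟨c, m, hm, hci, hic, h⟩ := hy i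
      have := h.unique (consecutive_iff.2 ⟨hi, hj, hij, hzero⟩) hci (by omega) le_rfl hij
      convert hm
      omega
    · obtain ⟨c, m, -, -, hNc, h⟩ := hy N
      exact ⟨c + m + 1, by omega, h.2.1⟩
    · obtain ⟨c, m, -, hcN, -, h⟩ := hy N
      exact ⟨c, hcN, h.1⟩

lemma shiftMap_mem_SGap {y : ℤ → Fin 2} (hS : S.Finite) (hy : y ∈ SGap S) :
    shiftMap y ∈ SGap S :=
  (mem_SGap_iff hS).2 (translate_mem_tilings ((mem_SGap_iff hS).1 hy) 1)

lemma pcount_SGap (hS : S.Finite) (n : ℕ) : pcount (SGap S) n = pcount (tilings S) n := by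
  classical
  refine pcount_eq_of_bijOn (φ := fun y i ↦ y i = 1) (fun y ↦ shiftMap_mem_SGap hS)
    ⟨fun y ↦ (mem_SGap_iff hS).1, fun y _ z _ hyz ↦ ?_, fun A hA ↦ ?_⟩ (fun y ↦ rfl) n
  · funext i
    have : y i = 1 ↔ z i = 1 := iff_of_eq (congrFun hyz i)
    omega
  · have hφ : (fun i ↦ (if A i then 1 else 0 : Fin 2) = 1) = A := by
      funext i
      simp
    exact ⟨fun i ↦ if A i then 1 else 0, (mem_SGap_iff hS).2 (by rwa [hφ]), hφ⟩

lemma ncard_eq_sum_of_existsUnique {α ι : Type*} {s : Set α} (hs : s.Finite) (I : Finset ι)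
    (p : ι → α → Prop) (h : ∀ a ∈ s, ∃! i, i ∈ I ∧ p i a) :
    s.ncard = ∑ i ∈ I, {a ∈ s | p i a}.ncard := by
  classical
  lift s to Finset α using hs
  have hfiber (a) (ha : a ∈ s) : (I.filter (p · a)).card = 1 := by
    obtain ⟨i, hi, hi'⟩ := h a ha
    exact Finset.card_eq_one.2 ⟨i, by grind⟩
  calc (s : Set α).ncard = ∑ a ∈ s, (I.filter (p · a)).card := by
        rw [Set.ncard_coe_finset, Finset.sum_congr rfl hfiber, Finset.card_eq_sum_ones]
    _ = ∑ i ∈ I, (s.filter (p i)).card :=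
        Finset.sum_card_bipartiteAbove_eq_sum_card_bipartiteBelow fun a i ↦ p i a
    _ = ∑ i ∈ I, {a ∈ (s : Set α) | p i a}.ncard := by
        simp only [← Set.ncard_coe_finset, Finset.coe_filter, Finset.mem_coe]

lemma finiteTilings_zero : finiteTilings S 0 = {fun i ↦ i = 0} := by
  ext B
  constructor
  · rintro ⟨hB, hB₀, -⟩
    funext i
    refine propext ⟨fun hi ↦ ?_, fun hi ↦ hi ▸ hB₀⟩
    have := hB i hi
    omega
  · rintro rfl
    exact ⟨by omega, rfl, by omega⟩

end Tiling

section Counting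

/-- The tilings of `ℤ` with period `n` one of whose tiles starts at `0`. -/
def markedTilings (S : Set ℕ) (n : ℕ) : Set (ℤ → Prop) :=
  {A ∈ perPts (tilings S) n | A 0}

variable {S : Set ℕ} {n : ℕ}

lemma consecutive_restrict {A : ℤ → Prop} {c d : ℤ} (hc : 0 ≤ c) (hd : d ≤ n) :
    Consecutive (fun i ↦ A i ∧ 0 ≤ i ∧ i ≤ n) c d ↔ Consecutive A c d := by
  constructor
  · rintro ⟨⟨hAc, -⟩, ⟨hAd, -⟩, hcd, hgap⟩
    refine ⟨hAc, hAd, hcd, fun k hk ↦ ?_⟩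
    have := hgap k
    grind
  · rintro ⟨hAc, hAd, hcd, hgap⟩
    exact ⟨⟨hAc, hc, by omega⟩, ⟨hAd, by omega, hd⟩, hcd, fun k hk ↦ hgap k hk.1⟩

lemma Covered.restrict {A : ℤ → Prop} {j : ℤ} (h : Covered S A j) (hA₀ : A 0) (hAn : A n)
    (hj₀ : 0 ≤ j) (hjn : j < n) : Covered S (fun i ↦ A i ∧ 0 ≤ i ∧ i ≤ n) j := by
  obtain ⟨c, m, hm, hcj, hjc, hcons⟩ := h
  have hc₀ := hcons.2.2.2 0 hA₀
  have hcn := hcons.2.2.2 n hAn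
  exact ⟨c, m, hm, hcj, hjc, (consecutive_restrict (by omega) (by omega)).2 hcons⟩

lemma apply_emod_of_mem_finiteTilings {B : ℤ → Prop} (hB : B ∈ finiteTilings S n) {i : ℤ}
    (hi : 0 ≤ i) (hin : i ≤ n) : B (i % n) ↔ B i := by
  obtain ⟨hsupp, hB₀, hcov⟩ := hB
  rcases hin.lt_or_eq with hin | rfl
  · rw [Int.emod_eq_of_lt hi hin]
  rw [Int.emod_self, iff_true_left hB₀]
  rcases Nat.eq_zero_or_pos n with rfl | hn
  · exact hB₀
  obtain ⟨c, m, -, -, hnc, -, hd, -⟩ := hcov (n - 1) (by omega) (by omega)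
  have := hsupp _ hd
  rwa [show (n : ℤ) = c + m + 1 by omega]

lemma extend_mem_markedTilings (hn : 0 < n) {B : ℤ → Prop} (hB : B ∈ finiteTilings S n) :
    (fun i ↦ B (i % n)) ∈ markedTilings S n := by
  have hmod {i : ℤ} (hi : 0 ≤ i) (hin : i ≤ n) := apply_emod_of_mem_finiteTilings hB hi hin
  obtain ⟨hsupp, hB₀, hcov⟩ := hB
  refine ⟨⟨fun j ↦ ?_, shiftMap_iterate_eq_self_iff.2 fun i ↦ by simp⟩, by simpa using hB₀⟩
  suffices hcov_mod : Covered S (fun i ↦ B (i % n)) (j % n) by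
    rw [← Int.emod_add_mul_ediv j n, ← covered_translate]
    simpa using hcov_mod
  obtain ⟨c, m, hm, hcj, hjc, hc, hd, hcd, hgap⟩ :=
    hcov (j % n) (Int.emod_nonneg j (by omega)) (Int.emod_lt_of_pos j (by omega))
  obtain ⟨hc₀, hcn⟩ := hsupp c hc
  obtain ⟨hd₀, hdn⟩ := hsupp _ hd
  refine ⟨c, m, hm, hcj, hjc, (hmod hc₀ hcn).2 hc, (hmod hd₀ hdn).2 hd, hcd, fun k hk ↦ ?_⟩
  by_contra!
  have := hgap k ((hmod (by omega) (by omega)).1 hk)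
  omega

lemma bijOn_restrict_markedTilings (hn : 0 < n) :
    Set.BijOn (fun (A : ℤ → Prop) i ↦ A i ∧ 0 ≤ i ∧ i ≤ n) (markedTilings S n)
      (finiteTilings S n) := by
  refine ⟨?_, ?_, ?_⟩
  · rintro A ⟨⟨hA, hper⟩, hA₀⟩
    have hAn : A n := by
      rwa [← zero_add (n : ℤ), shiftMap_iterate_eq_self_iff.1 hper]
    exact ⟨fun i hi ↦ hi.2, ⟨hA₀, by omega⟩, fun j hj₀ hjn ↦ (hA j).restrict hA₀ hAn hj₀ hjn⟩
  · rintro A ⟨⟨-, hA⟩, -⟩ A' ⟨⟨-, hA'⟩, -⟩ hAA'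
    rw [shiftMap_iterate_eq_self_iff] at hA hA'
    funext i
    have hi := Int.emod_nonneg i (b := n) (by omega)
    have hin := (Int.emod_lt_of_pos i (b := n) (by omega)).le
    rw [← apply_emod_of_periodic hA, ← apply_emod_of_periodic hA']
    simpa only [hi, hin, and_true] using congrFun hAA' (i % n)
  · intro B hB
    refine ⟨_, extend_mem_markedTilings hn hB, ?_⟩
    funext i
    have hBi := apply_emod_of_mem_finiteTilings hB (i := i)
    have := hB.1 i
    grind

lemma finite_perPts_tilings (hn : 0 < n) : (perPts (tilings S) n).Finite :=
  (finite_setOf_periodic hn).subset fun _ hA ↦ shiftMap_iterate_eq_self_iff.1 hA.2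

lemma finite_finiteTilings (n : ℕ) : (finiteTilings S n).Finite := by
  rcases Nat.eq_zero_or_pos n with rfl | hn
  · rw [finiteTilings_zero]
    exact Set.finite_singleton _
  · rw [← (bijOn_restrict_markedTilings hn).image_eq]
    exact ((finite_perPts_tilings hn).subset fun _ hA ↦ hA.1).image _

lemma ncard_markedTilings_consecutive (hn : 0 < n) {m : ℕ} (hm : m < n) :
    {A ∈ markedTilings S n | Consecutive A 0 (m + 1)}.ncard =
      {B ∈ finiteTilings S n | Consecutive B 0 (m + 1)}.ncard := by
  have h := bijOn_restrict_markedTilings (S := S) hn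
  rw [← (h.injOn.mono fun _ hA ↦ hA.1).ncard_image]
  congr 1
  ext B
  constructor
  · rintro ⟨A, ⟨hA, hcons⟩, rfl⟩
    exact ⟨h.mapsTo hA, (consecutive_restrict le_rfl (by omega)).2 hcons⟩
  · rintro ⟨hB, hcons⟩
    obtain ⟨A, hA, rfl⟩ := h.surjOn hB
    exact ⟨A, ⟨hA, (consecutive_restrict le_rfl (by omega)).1 hcons⟩, rfl⟩

/-- The tiling of `[0, n + m + 1)` obtained by shifting a tiling of `[0, n)` to the right and adding
the tile `[0, m]`. -/
def prependTile (m : ℕ) (B : ℤ → Prop) : ℤ → Prop := fun i ↦ i = 0 ∨ B (i - (m + 1))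

/-- The inverse of `prependTile m`. -/
def removeTile (m : ℕ) (B : ℤ → Prop) : ℤ → Prop := fun i ↦ 0 ≤ i ∧ B (i + (m + 1))

lemma prependTile_mem {m : ℕ} (hm : m ∈ S) {B : ℤ → Prop} (hB : B ∈ finiteTilings S n) :
    prependTile m B ∈ {B ∈ finiteTilings S (n + (m + 1)) | Consecutive B 0 (m + 1)} := by
  obtain ⟨hsupp, hB₀, hcov⟩ := hB
  have hL_supp (i : ℤ) (hi : prependTile m B i) : i = 0 ∨ m + 1 ≤ i ∧ i ≤ n + (m + 1) := by
    refine hi.imp_right fun hi ↦ ?_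
    have := hsupp _ hi
    omega
  have hfirst : Consecutive (prependTile m B) 0 (m + 1) :=
    ⟨.inl rfl, .inr (by simpa using hB₀), by omega, fun k hk ↦ by have := hL_supp k hk; omega⟩
  refine ⟨⟨fun i hi ↦ by have := hL_supp i hi; omega, .inl rfl, fun j hj₀ hjn ↦ ?_⟩, hfirst⟩
  rcases le_or_gt j m with hjm | hmj
  · exact ⟨0, m, hm, hj₀, by omega, by simpa using hfirst⟩
  · obtain ⟨c, m', hm', hcj, hjc, hc, hd, -, hgap⟩ := hcov (j - (m + 1)) (by omega) (by omega)
    refine ⟨c + (m + 1), m', hm', by omega, by omega, .inr (by simpa using hc), .inr ?_, by omega,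
      fun k hk ↦ ?_⟩
    · convert hd using 1
      ring
    · have := hsupp c hc
      rcases hk with rfl | hk
      · omega
      · have := hgap _ hk
        omega

lemma removeTile_mem {m : ℕ} {B : ℤ → Prop} (hB : B ∈ finiteTilings S (n + (m + 1)))
    (hfirst : Consecutive B 0 (m + 1)) : removeTile m B ∈ finiteTilings S n := by
  obtain ⟨hsupp, -, hcov⟩ := hB
  refine ⟨fun i ⟨hi, hBi⟩ ↦ ⟨hi, ?_⟩, ⟨le_rfl, by simpa using hfirst.2.1⟩, fun j hj₀ hjn ↦ ?_⟩
  · have := hsupp _ hBi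
    omega
  · obtain ⟨c, m', hm', hcj, hjc, hc, hd, -, hgap⟩ := hcov (j + (m + 1)) (by omega) (by omega)
    have hmc := hgap _ hfirst.2.1
    refine ⟨c - (m + 1), m', hm', by omega, by omega, ⟨by omega, by simpa using hc⟩,
      ⟨by omega, ?_⟩, by omega, fun k hk ↦ ?_⟩
    · convert hd using 1
      ring
    · have := hgap _ hk.2
      omega

lemma ncard_finiteTilings_consecutive {m : ℕ} (hm : m ∈ S) (n : ℕ) :
    {B ∈ finiteTilings S (n + (m + 1)) | Consecutive B 0 (m + 1)}.ncard =
      (finiteTilings S n).ncard := by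
  have hinv : Set.InvOn (removeTile m) (prependTile m) (finiteTilings S n)
      {B ∈ finiteTilings S (n + (m + 1)) | Consecutive B 0 (m + 1)} := by
    refine ⟨fun B hB ↦ ?_, fun B ⟨⟨hsupp, _⟩, hfirst⟩ ↦ ?_⟩ <;> funext i <;>
      simp only [removeTile, prependTile, add_sub_cancel_right, sub_add_cancel]
    · have := hB.1 i
      grind
    · have := hsupp i
      have := hfirst.1
      have := hfirst.2.2.2 i
      grind
  exact (hinv.bijOn (fun B ↦ prependTile_mem hm) fun B hB ↦ removeTile_mem hB.1 hB.2).ncard_eq.symm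

lemma ncard_finiteTilings_succ (S : Finset ℕ) (n : ℕ) :
    (finiteTilings S (n + 1)).ncard =
      ∑ m ∈ S with m ≤ n, (finiteTilings (S : Set ℕ) (n - m)).ncard := by
  rw [ncard_eq_sum_of_existsUnique (finite_finiteTilings _) (S.filter (· ≤ n))
    fun m B ↦ Consecutive B 0 (m + 1)]
  · refine Finset.sum_congr rfl fun m hm ↦ ?_
    obtain ⟨hm, hmn⟩ := Finset.mem_filter.1 hm
    rw [← ncard_finiteTilings_consecutive (Finset.mem_coe.2 hm),
      show n - m + (m + 1) = n + 1 by omega]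
  · rintro B ⟨hsupp, -, hcov⟩
    obtain ⟨c, m, hm, hc, -, hcons⟩ := hcov 0 le_rfl (by omega)
    obtain rfl : c = 0 := by
      have := hsupp c hcons.1
      omega
    rw [zero_add] at hcons
    have := hsupp _ hcons.2.1
    refine ⟨m, ⟨Finset.mem_filter.2 ⟨hm, by omega⟩, hcons⟩, fun m' hm' ↦ ?_⟩
    have := hm'.2.unique hcons le_rfl (by omega) le_rfl (by omega)
    omega

lemma ncard_perPts_tilings_consecutive (o n m : ℕ) :
    {A ∈ perPts (tilings S) n | Consecutive A (-o) (m + 1 - o)}.ncard =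
      {A ∈ markedTilings S n | Consecutive A 0 (m + 1)}.ncard := by
  have hinj : Function.Injective fun (A : ℤ → Prop) i ↦ A (i - o) := fun A A' h ↦ by
    funext i
    simpa using congrFun h (i + o)
  rw [← Set.ncard_image_of_injective _ hinj]
  congr 1
  ext A
  simp only [markedTilings, perPts, shiftMap_iterate_eq_self_iff]
  constructor
  · rintro ⟨A, ⟨⟨hA, hper⟩, hcons⟩, rfl⟩
    refine ⟨⟨⟨translate_mem_tilings hA (-o), fun i ↦ ?_⟩, by simpa using hcons.1⟩, ?_⟩
    · simpa [add_sub_right_comm] using hper (i - o)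
    · exact (consecutive_translate (-o)).2 (by simpa [sub_eq_add_neg] using hcons)
  · rintro ⟨⟨⟨hA, hper⟩, -⟩, hcons⟩
    refine ⟨fun i ↦ A (i + o), ⟨⟨translate_mem_tilings hA o, fun i ↦ ?_⟩, ?_⟩, by simp⟩
    · simpa [add_right_comm] using hper (i + o)
    · exact (consecutive_translate o).2 (by simpa using hcons)

/- The tile of a tiling that covers the cell `0` is some `[-o, m - o]` with `o ≤ m`, so it can be
moved to `[0, m]` in `m + 1` ways. -/
lemma pcount_tilings_succ (S : Finset ℕ) (n : ℕ) :
    pcount (tilings S) (n + 1) =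
      ∑ m ∈ S with m ≤ n, (m + 1) * (finiteTilings (S : Set ℕ) (n - m)).ncard := by
  rw [pcount, ncard_eq_sum_of_existsUnique (finite_perPts_tilings n.succ_pos)
    ((S.filter (· ≤ n)).sigma fun m ↦ Finset.range (m + 1))
    fun t A ↦ Consecutive A (-t.2) (t.1 + 1 - t.2), Finset.sum_sigma]
  · refine Finset.sum_congr rfl fun m hm ↦ ?_
    obtain ⟨hm, hmn⟩ := Finset.mem_filter.1 hm
    simp only [ncard_perPts_tilings_consecutive]
    rw [Finset.sum_const, Finset.card_range, smul_eq_mul,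
      ncard_markedTilings_consecutive n.succ_pos (by omega),
      ← ncard_finiteTilings_consecutive (Finset.mem_coe.2 hm),
      show n - m + (m + 1) = n + 1 by omega]
  · rintro A ⟨hA, hper⟩
    obtain ⟨c, m, hm, hc, hcm, hcons⟩ := hA 0
    have hnext := hcons.2.2.2 (c + (n + 1 : ℕ)) <| by
      rw [shiftMap_iterate_eq_self_iff.1 hper]
      exact hcons.1
    have hcons' : Consecutive A (-(-c).toNat) (m + 1 - (-c).toNat) := by
      convert hcons using 1 <;> omega
    refine ⟨⟨m, (-c).toNat⟩, ⟨?_, hcons'⟩, ?_⟩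
    · simp only [Finset.mem_sigma, Finset.mem_filter, Finset.mem_range]
      exact ⟨⟨hm, by omega⟩, by omega⟩
    · rintro ⟨m', o⟩ ⟨ht, ht'⟩
      simp only [Finset.mem_sigma, Finset.mem_filter, Finset.mem_range] at ht
      dsimp only at ht'
      have := ht'.unique hcons' (j := 0) (by omega) (by omega) (by omega) (by omega)
      grind

lemma zetaPS_tilings_mul (S : Finset ℕ) :
    zetaPS (tilings (S : Set ℕ)) * (1 - ∑ m ∈ S, PowerSeries.X ^ (m + 1)) = 1 :=
  expPS_mul_one_sub_eq_one_of_recurrence S _ (fun n ↦ (finiteTilings (S : Set ℕ) n).ncard)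
    (by simp [finiteTilings_zero]) (ncard_finiteTilings_succ S) (pcount_tilings_succ S)

end Counting

section Lexicographic

variable {A : Type} [LinearOrder A] {a u v w : ℕ → A} {x : ℤ → A} {i j : ℤ} {m n : ℕ}

/-- `u` is lexicographically smaller than `v`, the first difference being at `n`. -/
def DropsAt (u v : ℕ → A) (n : ℕ) : Prop := (∀ k < n, u k = v k) ∧ u n < v n

/-- Parry's condition: no tail of `a` is lexicographically larger than `a`. -/
def SelfAdmissible (a : ℕ → A) : Prop := ∀ k, lexLE (fun n ↦ a (k + n)) a

/-- The shift space of the sequences none of whose tails is lexicographically larger than `a`. -/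
def lexShift (a : ℕ → A) : Set (ℤ → A) := {x | ∀ i : ℤ, lexLE (fun n : ℕ ↦ x (i + n)) a}

/-- The tail of `x` at `i` first differs from `a` at the cell `i + m`, where it is smaller: the
block `[i, i + m]` of `x` reads `a 0, …, a (m - 1), b` with `b < a m`. -/
def BlockAt (a : ℕ → A) (x : ℤ → A) (i : ℤ) (m : ℕ) : Prop := DropsAt (fun n : ℕ ↦ x (i + n)) a m

/-- The sequences all of whose tails are lexicographically smaller than `a`. -/
def strictLexShift (a : ℕ → A) : Set (ℤ → A) := {x | ∀ i, ∃ m, BlockAt a x i m}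

/-- No block of `x` contains both cells `j - 1` and `j`. -/
def IsCut (a : ℕ → A) (x : ℤ → A) (j : ℤ) : Prop := ∀ i m, BlockAt a x i m → i < j → i + m < j

lemma DropsAt.unique (hm : DropsAt u v m) (hn : DropsAt u v n) : m = n := by
  rcases lt_trichotomy m n with h | h | h
  · exact absurd (hn.1 m h) hm.2.ne
  · exact h
  · exact absurd (hm.1 n h) hn.2.ne

lemma DropsAt.trans_lexLE (hm : DropsAt u v m) (h : lexLE v w) : ∃ q ≤ m, DropsAt u w q := by
  rcases h with rfl | ⟨n, hn, hlt⟩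
  · exact ⟨m, le_rfl, hm⟩
  rcases lt_trichotomy m n with h | rfl | h
  · exact ⟨m, le_rfl, fun k hk ↦ (hm.1 k hk).trans (hn k (hk.trans h)), hn m h ▸ hm.2⟩
  · exact ⟨m, le_rfl, fun k hk ↦ (hm.1 k hk).trans (hn k hk), hm.2.trans hlt⟩
  · exact ⟨n, h.le, fun k hk ↦ (hm.1 k (hk.trans h)).trans (hn k hk), (hm.1 n h).trans_lt hlt⟩

lemma lexLE_of_forall (h : ∀ n, (∀ k < n, u k = v k) → u n ≤ v n) : lexLE u v := by
  by_contra hlex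
  obtain ⟨hne, hdrop⟩ := not_or.1 hlex
  push Not at hdrop
  refine hne (funext fun n ↦ ?_)
  induction n using Nat.strong_induction_on with
  | h n ih => exact (h n ih).antisymm (hdrop n ih)

lemma BlockAt.exists_suffix (ha : SelfAdmissible a) (h : BlockAt a x i m) (hij : i ≤ j)
    (hjm : j ≤ i + m) : ∃ q : ℕ, j + q ≤ i + m ∧ BlockAt a x j q := by
  obtain ⟨k, rfl⟩ := Int.le.dest hij
  have hsuffix : DropsAt (fun n : ℕ ↦ x (i + k + n)) (fun n ↦ a (k + n)) (m - k) := by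
    refine ⟨fun l hl ↦ ?_, ?_⟩
    · simpa [add_assoc] using h.1 (k + l) (by omega)
    · have := h.2
      rw [show m = k + (m - k) by omega] at this
      simpa [add_assoc] using this
  obtain ⟨q, hq, hblock⟩ := hsuffix.trans_lexLE (ha k)
  exact ⟨q, by omega, hblock⟩

lemma BlockAt.nested (ha : SelfAdmissible a) (h : BlockAt a x i m) (h' : BlockAt a x j n)
    (hij : i ≤ j) (hjm : j ≤ i + m) : j + n ≤ i + m := by
  obtain ⟨q, hq, hblock⟩ := h.exists_suffix ha hij hjm
  rwa [h'.unique hblock]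

lemma BlockAt.consecutive_isCut (ha : SelfAdmissible a) (h : BlockAt a x i m)
    (hi : IsCut a x i) : Consecutive (IsCut a x) i (i + m + 1) := by
  refine ⟨hi, fun k n hblock hk ↦ ?_, by omega, fun k hk ↦ ?_⟩
  · rcases lt_or_ge k i with hki | hik
    · have := hi k n hblock hki
      omega
    · have := h.nested ha hblock hik (by omega)
      omega
  · have := hk i m h
    omega

lemma blockAt_shiftMap : BlockAt a (shiftMap x) i m ↔ BlockAt a x (i + 1) m := by
  simp only [BlockAt, shiftMap, add_right_comm]

lemma shiftMap_mem_strictLexShift (hx : x ∈ strictLexShift a) : shiftMap x ∈ strictLexShift a :=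
  fun i ↦ (hx (i + 1)).imp fun _ ↦ blockAt_shiftMap.2

lemma isCut_shiftMap (a : ℕ → A) (x : ℤ → A) :
    IsCut a (shiftMap x) = shiftMap (IsCut a x) := by
  funext j
  simp only [IsCut, blockAt_shiftMap, eq_iff_iff]
  refine ⟨fun h i m hb hi ↦ ?_, fun h i m hb hi ↦ ?_⟩
  · have := h (i - 1) m (by simpa using hb) (by omega)
    omega
  · have := h (i + 1) m hb (by omega)
    omega

lemma perPts_lexShift [Zero A] {N : ℕ} (ha : a ≠ 0) (haN : ∀ m > N, a m = 0) (hn : 0 < n) :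
    perPts (lexShift a) n = perPts (strictLexShift a) n := by
  ext x
  refine and_congr_left fun hper ↦ forall_congr' fun i ↦ or_iff_right fun htail ↦ ha ?_
  rw [shiftMap_iterate_eq_self_iff] at hper
  funext k
  have hNn : N + 1 ≤ n * (N + 1) := Nat.le_mul_of_pos_left _ hn
  calc a k = x (i + k) := (congrFun htail k).symm
    _ = x (i + k + (N + 1 : ℕ) * n) := (hper.nat_mul (N + 1) _).symm
    _ = a (k + n * (N + 1)) := by
      rw [← htail]
      push_cast
      ring_nf
    _ = 0 := haN _ (by omega)

end Lexicographic

section Binary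

variable {a : ℕ → Fin 2} {x y : ℤ → Fin 2} {i j : ℤ} {m N : ℕ}

lemma BlockAt.apply_eq_one (h : BlockAt a x i m) : a m = 1 := by
  have := h.2
  omega

lemma BlockAt.apply_eq (h : BlockAt a x i m) (hij : i ≤ j) (hjm : j ≤ i + m) :
    x j = if j = i + m then 0 else a (j - i).toNat := by
  obtain ⟨k, rfl⟩ := Int.le.dest hij
  split_ifs with hk
  · obtain rfl : k = m := by omega
    have : x (i + k) < a k := h.2
    omega
  · simpa using h.1 k (by omega)

lemma exists_blockAt_isCut (ha : SelfAdmissible a) (haN : ∀ m > N, a m = 0)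
    (hx : x ∈ strictLexShift a) (j : ℤ) :
    ∃ c m, BlockAt a x c m ∧ IsCut a x c ∧ c ≤ j ∧ j ≤ c + m := by
  obtain ⟨m₀, hm₀⟩ := hx j
  have hbdd (c : ℤ) : (∃ m, BlockAt a x c m ∧ c ≤ j ∧ j ≤ c + m) → j - N ≤ c := by
    rintro ⟨m, hblock, -, hjc⟩
    have := hblock.apply_eq_one
    by_contra!
    have := haN m (by omega)
    omega
  obtain ⟨c, ⟨m, hblock, hcj, hjc⟩, hleast⟩ :=
    Int.exists_least_of_bdd ⟨_, hbdd⟩ ⟨j, m₀, hm₀, le_rfl, by omega⟩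
  refine ⟨c, m, hblock, fun i n hi hic ↦ ?_, hcj, hjc⟩
  by_contra! hci
  have := hi.nested ha hblock hic.le hci
  have := hleast i ⟨n, hi, by omega, by omega⟩
  omega

lemma isCut_mem_tilings (ha : SelfAdmissible a) (haN : ∀ m > N, a m = 0)
    (hx : x ∈ strictLexShift a) : IsCut a x ∈ tilings {m | a m = 1} := fun j ↦ by
  obtain ⟨c, m, hblock, hc, hcj, hjc⟩ := exists_blockAt_isCut ha haN hx j
  exact ⟨c, m, hblock.apply_eq_one, hcj, hjc, hblock.consecutive_isCut ha hc⟩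

lemma injOn_isCut (ha : SelfAdmissible a) (haN : ∀ m > N, a m = 0) :
    Set.InjOn (IsCut a) (strictLexShift a) := fun x hx y hy hxy ↦ by
  funext j
  obtain ⟨c, m, hblock, hc, hcj, hjc⟩ := exists_blockAt_isCut ha haN hx j
  obtain ⟨c', m', hblock', hc', hcj', hjc'⟩ := exists_blockAt_isCut ha haN hy j
  have hcons := hblock.consecutive_isCut ha hc
  rw [hxy] at hcons
  obtain ⟨rfl, hmm'⟩ :=
    hcons.unique (hblock'.consecutive_isCut ha hc') hcj (by omega) hcj' (by omega)
  obtain rfl : m = m' := by omega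
  rw [hblock.apply_eq hcj hjc, hblock'.apply_eq hcj hjc]

lemma exists_blockAt_of_mem_tilings {C : ℤ → Prop} (hC : C ∈ tilings {m | a m = 1}) :
    ∃ x, ∀ c : ℤ, ∀ m : ℕ, a m = 1 → Consecutive C c (c + m + 1) → BlockAt a x c m := by
  choose c m _ hcj hjc hcons using hC
  refine ⟨fun j ↦ if j = c j + m j then 0 else a (j - c j).toNat, fun c₀ m₀ hm₀ hcons₀ ↦ ?_⟩
  have hc {k : ℕ} (hk : k ≤ m₀) : c (c₀ + k) = c₀ ∧ m (c₀ + k) = m₀ := by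
    have := (hcons (c₀ + k)).unique hcons₀ (hcj _) (by have := hjc (c₀ + k); omega)
      (by omega) (by omega)
    omega
  refine ⟨fun k hk ↦ ?_, ?_⟩
  · simp [hc hk.le, hk.ne]
  · simp [hc le_rfl, hm₀]

lemma isCut_eq_of_forall_blockAt (ha : SelfAdmissible a) {C : ℤ → Prop}
    (hC : C ∈ tilings {m | a m = 1})
    (hx : ∀ c : ℤ, ∀ m : ℕ, a m = 1 → Consecutive C c (c + m + 1) → BlockAt a x c m) :
    IsCut a x = C := by
  funext j
  refine propext ⟨fun hj ↦ ?_, fun hj i n hblock hij ↦ ?_⟩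
  · obtain ⟨c, m, hm, hcj, hjc, hcons⟩ := hC j
    have := hj c m (hx c m hm hcons)
    obtain rfl : c = j := by omega
    exact hcons.1
  · obtain ⟨c, m, hm, hci, hic, hcons⟩ := hC i
    have := (hx c m hm hcons).nested ha hblock hci hic
    have := hcons.2.2.2 j hj
    omega

lemma surjOn_isCut (ha : SelfAdmissible a) :
    Set.SurjOn (IsCut a) (strictLexShift a) (tilings {m | a m = 1}) := fun C hC ↦ by
  obtain ⟨x, hx⟩ := exists_blockAt_of_mem_tilings hC
  refine ⟨x, fun i ↦ ?_, isCut_eq_of_forall_blockAt ha hC hx⟩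
  obtain ⟨c, m, hm, hci, hic, hcons⟩ := hC i
  obtain ⟨q, -, hq⟩ := (hx c m hm hcons).exists_suffix ha hci hic
  exact ⟨q, hq⟩

lemma pcount_lexShift (ha : SelfAdmissible a) (ha₀ : a ≠ 0) (haN : ∀ m > N, a m = 0) {n : ℕ}
    (hn : 0 < n) : pcount (lexShift a) n = pcount (tilings {m | a m = 1}) n := by
  rw [pcount, perPts_lexShift ha₀ haN hn, ← pcount]
  exact pcount_eq_of_bijOn (fun x ↦ shiftMap_mem_strictLexShift)
    ⟨fun x ↦ isCut_mem_tilings ha haN, injOn_isCut ha haN, surjOn_isCut ha⟩ (isCut_shiftMap a) n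

end Binary

section BetaExpansion

/-- The orbit of `1` under the `β`-transformation: `betaRem β n` rescaled by `β ^ n`. -/
noncomputable def betaOrbit (β : ℝ) (n : ℕ) : ℝ := β ^ n * betaRem β n

variable {β : ℝ}

lemma betaDigit_eq (hβ : 0 < β) (n : ℕ) :
    betaDigit β n = if 1 ≤ β * betaOrbit β n then 1 else 0 := by
  have digit_iff : β⁻¹ ^ (n + 1) ≤ betaRem β n ↔ 1 ≤ β * betaOrbit β n := by
    rw [betaOrbit, inv_pow, inv_le_iff_one_le_mul₀' (by positivity), pow_succ', mul_assoc]
  simp only [betaDigit, digit_iff]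

lemma betaOrbit_succ (hβ : 0 < β) (n : ℕ) :
    betaOrbit β (n + 1) = β * betaOrbit β n - (betaDigit β n : ℕ) := by
  have : β ^ (n + 1) * β⁻¹ ^ (n + 1) = 1 := by
    rw [← mul_pow, mul_inv_cancel₀ hβ.ne', one_pow]
  rw [betaOrbit, betaOrbit, betaRem, betaDigit, mul_sub, pow_succ', mul_assoc]
  split_ifs <;> simp_all [pow_succ', mul_assoc]

lemma betaOrbit_le_one (hβ : 0 < β) (hβ₂ : β ≤ 2) (n : ℕ) : betaOrbit β n ≤ 1 := by
  induction n with
  | zero => simp [betaOrbit, betaRem]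
  | succ n ih =>
    rw [betaOrbit_succ hβ, betaDigit_eq hβ]
    split_ifs with h
    · have : β * betaOrbit β n ≤ 2 := by nlinarith
      rw [Fin.val_one, Nat.cast_one]
      linarith
    · simpa using (not_le.1 h).le

lemma selfAdmissible_betaDigit (hβ : 0 < β) (hβ₂ : β ≤ 2) : SelfAdmissible (betaDigit β) := by
  refine fun k ↦ lexLE_of_forall fun n hn ↦ ?_
  have orbit_le : ∀ j ≤ n, betaOrbit β (k + j) ≤ betaOrbit β j := by
    intro j hj
    induction j with
    | zero => simpa [betaOrbit, betaRem] using betaOrbit_le_one hβ hβ₂ k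
    | succ j ih =>
      rw [← add_assoc, betaOrbit_succ hβ, betaOrbit_succ hβ, hn j (by omega)]
      gcongr
      exact ih (by omega)
  rw [betaDigit_eq hβ, betaDigit_eq hβ]
  have := mul_le_mul_of_nonneg_left (orbit_le n le_rfl) hβ.le
  split_ifs <;> grind

end BetaExpansion

/-- If `β ∈ (1,2]` with `1_β = a_1 ⋯ a_n 0^∞`, `a_n = 1` (`X_β` SFT;
here `betaDigit β k = a_{k+1}` and the last nonzero digit is `a_{N+1}`), and
`{i_1 = 1 < ⋯ < i_t} = {i ≤ n : a_i = 1}`, then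
`ζ_{σ_β}(t)·(1 - t^{i_1} - ⋯ - t^{i_t}) = 1`, and `ζ_{σ_β} = ζ_{σ_S}` for
`X(S) = ASS(X_β)`. -/
theorem zeta_beta_SFT
    (β : ℝ) (hβ1 : 1 < β) (hβ2 : β ≤ 2)
    (N : ℕ) (hN : betaDigit β N = 1) (h0 : ∀ m > N, betaDigit β m = 0) :
    zetaPS (betaShift β) *
        (1 - ∑ k ∈ Finset.range (N + 1),
          if betaDigit β k = 1 then (PowerSeries.X : PowerSeries ℚ) ^ (k + 1) else 0) = 1 ∧
    zetaPS (betaShift β) = zetaPS (SGap (assocS β)) := by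
  set S := {m ∈ Finset.range (N + 1) | betaDigit β m = 1} with hS
  have assocS_eq : assocS β = S := by
    ext m
    have := h0 m
    simp only [assocS, hS, Set.mem_ofPred_eq, Finset.coe_filter, Finset.mem_range]
    grind
  have hβ0 : betaDigit β ≠ 0 := fun h ↦ by simp [h] at hN
  have hβ : zetaPS (betaShift β) = zetaPS (tilings S) := by
    rw [← assocS_eq]
    exact zetaPS_congr fun n ↦
      pcount_lexShift (selfAdmissible_betaDigit (by linarith) hβ2) hβ0 h0
  have hgap : zetaPS (SGap (assocS β)) = zetaPS (tilings S) := by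
    rw [assocS_eq]
    exact zetaPS_congr fun n _ ↦ pcount_SGap S.finite_toSet n
  rw [← Finset.sum_filter, hβ, hgap]
  exact ⟨zetaPS_tilings_mul S, rfl⟩
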